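/- arXiv:1509.07852 — 2 statements merged into one kernel-verified Lean document; each statement's English description precedes it below -/
import Mathlib

section
/- Let q be a complex number with 0 < |q| < 1, let r be a natural number, and let x be a complex number with |x| < 1. Then x^r·E_q(x) − q^{−r}·(qx)^r·E_q(qx) = x^{r+1}·E_q(x). (This is the identity (1 − q^{−r} q^{X∂_X})(X^r e^{∑_{k>0} X^k/(k(1-q^k))}) = X^{r+1} e^{∑_{k>0} X^k/(k(1-q^k))} from the proof of Theorem 2.) -/
/-!
The `k`-th term of the exponent of `E_q(x)` minus that of `E_q(qx)` is
`x^k (1 - q^k) / (k (1 - q^k)) = x^k / k`, and `∑ x^k / k = -log (1 - x)`. Exponentiating gives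
the functional equation `E_q(qx) = (1 - x) E_q(x)` (`qExp_mul_left`), and the theorem follows
because `q^{-r} (qx)^r = x^r`.
-/

/-- The q-exponential `E_q(x) = exp(∑_{k≥1} x^k/(k(1-q^k)))`, defined for `|x| < 1`. -/
noncomputable def qExp (q x : ℂ) : ℂ :=
  Complex.exp (∑' k : ℕ, x ^ (k + 1) / ((k + 1 : ℂ) * (1 - q ^ (k + 1))))

lemma one_sub_pow_ne_zero {q : ℂ} (hq : ‖q‖ < 1) (k : ℕ) : 1 - q ^ (k + 1) ≠ 0 := by
  intro h
  have h1 : ‖q ^ (k + 1)‖ = 1 := by rw [← sub_eq_zero.mp h, norm_one]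
  rw [norm_pow] at h1
  exact (pow_lt_one₀ (norm_nonneg q) hq k.succ_ne_zero).ne h1

/-- The series in the exponent of `E_q(x)` is dominated by the geometric series
`∑ |x|^k / (1 - |q|)`. -/
lemma summable_qExp {q x : ℂ} (hq : ‖q‖ < 1) (hx : ‖x‖ < 1) :
    Summable fun k : ℕ => x ^ (k + 1) / ((k + 1 : ℂ) * (1 - q ^ (k + 1))) := by
  have hpos : 0 < 1 - ‖q‖ := sub_pos.mpr hq
  have hg : Summable fun k : ℕ => ‖x‖ ^ (k + 1) / (1 - ‖q‖) :=
    (((summable_geometric_of_lt_one (norm_nonneg x) hx).mul_left ‖x‖).div_const (1 - ‖q‖)).congr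
      fun k => by rw [pow_succ']
  refine Summable.of_norm_bounded hg fun k => ?_
  have h1 : 1 - ‖q‖ ≤ ‖1 - q ^ (k + 1)‖ := by
    have h2 : ‖q‖ ^ (k + 1) ≤ ‖q‖ := pow_le_of_le_one (norm_nonneg q) hq.le k.succ_ne_zero
    have h3 := norm_sub_norm_le (1 : ℂ) (q ^ (k + 1))
    rw [norm_one, norm_pow] at h3
    linarith
  have h4 : (1 : ℝ) ≤ ‖(k + 1 : ℂ)‖ := by
    have : ‖(k + 1 : ℂ)‖ = (k + 1 : ℝ) := by
      exact_mod_cast Complex.norm_natCast (k + 1)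
    rw [this]
    linarith [(Nat.cast_nonneg k : (0 : ℝ) ≤ k)]
  rw [norm_div, norm_pow, norm_mul]
  gcongr
  nlinarith

/-- The functional equation `E_q(qx) = (1 - x) E_q(x)`. -/
lemma qExp_mul_left {q x : ℂ} (hq : ‖q‖ < 1) (hx : ‖x‖ < 1) :
    qExp q (q * x) = (1 - x) * qExp q x := by
  have hqx : ‖q * x‖ < 1 := by
    rw [norm_mul]
    exact mul_lt_one_of_nonneg_of_lt_one_left (norm_nonneg q) hq hx.le
  have hx1 : 1 - x ≠ 0 := by simpa using one_sub_pow_ne_zero hx 0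
  have hdiff := (summable_qExp hq hx).hasSum.sub (summable_qExp hq hqx).hasSum
  have hterm : (fun k : ℕ => x ^ (k + 1) / ((k + 1 : ℂ) * (1 - q ^ (k + 1))) -
      (q * x) ^ (k + 1) / ((k + 1 : ℂ) * (1 - q ^ (k + 1)))) =
      fun k : ℕ => x ^ (k + 1) / (k + 1 : ℂ) := by
    funext k
    have h1 := one_sub_pow_ne_zero hq k
    have h2 : (k + 1 : ℂ) ≠ 0 := Nat.cast_add_one_ne_zero k
    rw [← sub_div, mul_pow, div_eq_div_iff (mul_ne_zero h2 h1) h2]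
    ring
  rw [hterm] at hdiff
  have key := hdiff.unique (Complex.hasSum_taylorSeries_neg_log' hx)
  unfold qExp
  rw [← Complex.exp_log hx1, ← Complex.exp_add]
  congr 1
  linear_combination -key

/-- The identity `(1 − q^{−r} q^{X∂_X})(X^r e^{∑_{k>0} X^k/(k(1-q^k))}) =
X^{r+1} e^{∑_{k>0} X^k/(k(1-q^k))}` from the proof of Theorem 2:
`x^r·E_q(x) − q^{−r}·(qx)^r·E_q(qx) = x^{r+1}·E_q(x)`. -/
theorem qExp_step (q : ℂ) (hq0 : 0 < ‖q‖) (hq : ‖q‖ < 1) (r : ℕ) (x : ℂ) (hx : ‖x‖ < 1) :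
    x ^ r * qExp q x - q ^ (-(r : ℤ)) * (q * x) ^ r * qExp q (q * x) =
      x ^ (r + 1) * qExp q x := by
  have hq' : q ^ r ≠ 0 := pow_ne_zero r (norm_pos_iff.mp hq0)
  have hr : q ^ (-(r : ℤ)) * (q * x) ^ r = x ^ r := by
    rw [zpow_neg, zpow_natCast, mul_pow, inv_mul_cancel_left₀ hq']
  rw [hr, qExp_mul_left hq hx]
  ring
end

section
/- Let K, N ≥ 1, let (m_{ij}) be a K×N integer matrix, let m ≥ 1 be an integer, let p ∈ ℝ^K and Q ∈ ℝ^K with all Q_i > 0, and set u_j(p) := ∑_{i=1}^K p_i·m_{ij}. Then the following are equivalent: (a) there exists X ∈ ℝ^N with 0 < X_j < 1 for all j, satisfying the constraints ∏_{j=1}^N X_j^{m_{ij}} = Q_i for all i, and such that all partial derivatives of φ(X) = ∑_j ∑_{l≥1} X_j^{lm}/(l²m²) − ∑_i p_i(∑_j m_{ij}·log X_j − log Q_i) vanish at X; (b) u_j(p) > 0 for all j and Q_i^m = ∏_{j=1}^N (1 − exp(−m·u_j(p)))^{m_{ij}} for all i. (This identifies the Lagrangian variety L_m parameterized by critical points of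 the K-theoretic mirror phase with the variety Q_i^m = ∏_j (1 − U_j^m)^{m_{ij}}, the deformed Kirwan relations when m = 1.) -/
/-! For `0 < X_j < 1`, termwise differentiation of the dilogarithm-type series and the Taylor series
of the logarithm give
`∂φ/∂X_j = (−log (1 − X_j^m) / m − u_j(p)) / X_j` (`hasDerivAt_kPhase`).
This vanishes exactly when `1 − X_j^m = exp (−m u_j(p))`, that is
`X_j^m = 1 − exp (−m u_j(p))` (`deriv_kPhase_eq_zero_iff`). In particular `X_j^m ∈ (0,1)` corresponds
to `u_j(p) > 0`, and raising the constraints `∏_j X_j^{m_{ij}} = Q_i` to the `m`-th power turns them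
into the deformed Kirwan relations. Nothing is lost in this step because both sides are positive, and
conversely the positive `m`-th root of `1 − exp (−m u_j(p))` is the required critical point. -/

/-- The toric divisor class `u_j(p) = ∑_i p_i m_{ij}`. -/
def toricU (K N : ℕ) (mmat : Fin K → Fin N → ℤ) (p : Fin K → ℝ) (j : Fin N) : ℝ :=
  ∑ i, p i * (mmat i j : ℝ)

/-- The K-theoretic mirror phase (near a primitive `m`-th root of unity) with
Lagrange multipliers:
`φ(X) = ∑_j ∑_{l≥1} X_j^{lm}/(l²m²) − ∑_i p_i (∑_j m_{ij} log X_j − log Q_i)`. -/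
noncomputable def kPhase (K N : ℕ) (mmat : Fin K → Fin N → ℤ) (m : ℕ)
    (p Q : Fin K → ℝ) (X : Fin N → ℝ) : ℝ :=
  (∑ j, ∑' l : ℕ, X j ^ ((l + 1) * m) / (((l : ℝ) + 1) ^ 2 * (m : ℝ) ^ 2)) -
    ∑ i, p i * ((∑ j, (mmat i j : ℝ) * Real.log (X j)) - Real.log (Q i))

/-- Termwise differentiation of the series `∑_{l≥1} t^{lm}/(l²m²)` on `(0,1)`. -/
lemma hasDerivAt_tsum_pow_div_sq {m : ℕ} (hm : 1 ≤ m) {x : ℝ} (hx0 : 0 < x) (hx1 : x < 1) :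
    HasDerivAt (fun t : ℝ => ∑' l : ℕ, t ^ ((l + 1) * m) / (((l : ℝ) + 1) ^ 2 * (m : ℝ) ^ 2))
      (-Real.log (1 - x ^ m) / (m * x)) x := by
  have hm0 : (0 : ℝ) < m := by exact_mod_cast hm
  have hm1 : (1 : ℝ) ≤ m := by exact_mod_cast hm
  obtain ⟨r, hxr, hr1⟩ := exists_between hx1
  have hr0 : 0 < r := hx0.trans hxr
  -- On `(0, r)` with `x < r < 1` the differentiated series is dominated by `∑ r ^ l`.
  have key := hasDerivAt_tsum_of_isPreconnected (u := fun l : ℕ => r ^ l)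
    (g := fun (l : ℕ) (t : ℝ) => t ^ ((l + 1) * m) / (((l : ℝ) + 1) ^ 2 * (m : ℝ) ^ 2))
    (g' := fun (l : ℕ) (t : ℝ) => t ^ ((l + 1) * m - 1) / (((l : ℝ) + 1) * m))
    (t := Set.Ioo 0 r) (y₀ := x) (y := x)
    (summable_geometric_of_lt_one hr0.le hr1) isOpen_Ioo isPreconnected_Ioo
    (by
      intro l t _
      have h := (hasDerivAt_pow ((l + 1) * m) t).div_const (((l : ℝ) + 1) ^ 2 * (m : ℝ) ^ 2)
      refine h.congr_deriv ?_
      push_cast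
      field_simp)
    (by
      intro l t ht
      have h1 : (1 : ℝ) ≤ ((l : ℝ) + 1) * m := by
        have : (0 : ℝ) ≤ l := l.cast_nonneg
        nlinarith
      have hl : l ≤ (l + 1) * m - 1 := by
        have : (l + 1) * 1 ≤ (l + 1) * m := Nat.mul_le_mul_left _ hm
        omega
      rw [Real.norm_of_nonneg (div_nonneg (pow_nonneg ht.1.le _) (by linarith))]
      calc t ^ ((l + 1) * m - 1) / (((l : ℝ) + 1) * m)
          ≤ t ^ ((l + 1) * m - 1) := div_le_self (pow_nonneg ht.1.le _) h1
        _ ≤ t ^ l := pow_le_pow_of_le_one ht.1.le (ht.2.trans hr1).le hl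
        _ ≤ r ^ l := pow_le_pow_left₀ ht.1.le ht.2.le l)
    ⟨hx0, hxr⟩
    (by
      refine Summable.of_nonneg_of_le (fun l => by positivity) (fun l => ?_)
        (summable_geometric_of_lt_one hx0.le hx1)
      have h0 : (0 : ℝ) ≤ l := l.cast_nonneg
      have h1 : (1 : ℝ) ≤ ((l : ℝ) + 1) ^ 2 * (m : ℝ) ^ 2 :=
        one_le_mul_of_one_le_of_one_le (one_le_pow₀ (by linarith)) (one_le_pow₀ hm1)
      have hl : l ≤ (l + 1) * m := by nlinarith
      exact (div_le_self (by positivity) h1).trans (pow_le_pow_of_le_one hx0.le hx1.le hl))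
    ⟨hx0, hxr⟩
  refine key.congr_deriv ?_
  have hxm : |x ^ m| < 1 := by
    rw [abs_of_pos (by positivity)]
    exact pow_lt_one₀ hx0.le hx1 (by omega)
  have hs := (Real.hasSum_pow_div_log_of_abs_lt_one hxm).div_const ((m : ℝ) * x)
  rw [← hs.tsum_eq]
  refine tsum_congr fun l => ?_
  have hl : (l + 1) * m = ((l + 1) * m - 1) + 1 := by
    have : 0 < (l + 1) * m := by positivity
    omega
  rw [← pow_mul, mul_comm m, hl, pow_succ, ← hl]
  field_simp

/-- A weighted sum of one-variable functions of the coordinates, differentiated in `X_j`. -/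
lemma hasDerivAt_sum_update {N : ℕ} (X : Fin N → ℝ) (j : Fin N) (c : Fin N → ℝ)
    {f : ℝ → ℝ} {f' : ℝ} (hf : HasDerivAt f f' (X j)) :
    HasDerivAt (fun t => ∑ k, c k * f (Function.update X j t k)) (c j * f') (X j) := by
  have h : ∀ k ∈ Finset.univ, HasDerivAt (fun t => c k * f (Function.update X j t k))
      (if k = j then c j * f' else 0) (X j) := by
    intro k _
    by_cases hk : k = j
    · subst hk
      simpa using hf.const_mul (c k)
    · simpa [hk] using hasDerivAt_const (X j) (c k * f (X k))
  simpa using HasDerivAt.fun_sum h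

/-- The partial derivative `∂φ/∂X_j` at a point with `X_j ∈ (0,1)`. -/
lemma hasDerivAt_kPhase {K N : ℕ} (mmat : Fin K → Fin N → ℤ) {m : ℕ} (hm : 1 ≤ m)
    (p Q : Fin K → ℝ) (X : Fin N → ℝ) (j : Fin N) (h0 : 0 < X j) (h1 : X j < 1) :
    HasDerivAt (fun t => kPhase K N mmat m p Q (Function.update X j t))
      (-Real.log (1 - X j ^ m) / (m * X j) - toricU K N mmat p j / X j) (X j) := by
  have hA := hasDerivAt_sum_update X j (fun _ => 1) (hasDerivAt_tsum_pow_div_sq hm h0 h1)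
  have hB : HasDerivAt (fun t => ∑ i, p i *
      ((∑ k, (mmat i k : ℝ) * Real.log (Function.update X j t k)) - Real.log (Q i)))
      (∑ i, p i * ((mmat i j : ℝ) * (X j)⁻¹)) (X j) :=
    HasDerivAt.fun_sum fun i _ =>
      ((hasDerivAt_sum_update X j (fun k => (mmat i k : ℝ))
        (Real.hasDerivAt_log h0.ne')).sub_const _).const_mul (p i)
  have h := hA.fun_sub hB
  simp only [one_mul] at h
  refine h.congr_deriv ?_
  rw [toricU, div_eq_mul_inv (∑ i, _), Finset.sum_mul]
  simp only [mul_assoc]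

lemma deriv_kPhase_eq_zero_iff {K N : ℕ} (mmat : Fin K → Fin N → ℤ) {m : ℕ} (hm : 1 ≤ m)
    (p Q : Fin K → ℝ) (X : Fin N → ℝ) (j : Fin N) (h0 : 0 < X j) (h1 : X j < 1) :
    deriv (fun t => kPhase K N mmat m p Q (Function.update X j t)) (X j) = 0 ↔
      X j ^ m = 1 - Real.exp (-(m : ℝ) * toricU K N mmat p j) := by
  have hm0 : (0 : ℝ) < m := by exact_mod_cast hm
  have hpos : 0 < 1 - X j ^ m := sub_pos.2 (pow_lt_one₀ h0.le h1 (by omega))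
  have hlog : deriv (fun t => kPhase K N mmat m p Q (Function.update X j t)) (X j) = 0 ↔
      Real.log (1 - X j ^ m) = -(m : ℝ) * toricU K N mmat p j := by
    rw [(hasDerivAt_kPhase mmat hm p Q X j h0 h1).deriv, sub_eq_zero,
      div_eq_div_iff (by positivity) h0.ne']
    constructor
    · intro h
      apply mul_right_cancel₀ h0.ne'
      linarith
    · intro h
      rw [h]
      ring
  rw [hlog]
  constructor
  · intro h
    rw [← h, Real.exp_log hpos]
    ring
  · intro h
    rw [h, sub_sub_cancel, Real.log_exp]

/-- The Lagrangian variety `L_m` parameterized by critical points of the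
K-theoretic mirror phase is cut out by the deformed Kirwan relations
`Q_i^m = ∏_j (1 − U_j^m)^{m_{ij}}` (with `U_j^m = exp(−m·u_j(p))`): a critical
point of `φ` subject to `∏_j X_j^{m_{ij}} = Q_i`, with `0 < X_j < 1`, exists iff
`u_j(p) > 0` for all `j` and `Q_i^m = ∏_j (1 − exp(−m·u_j(p)))^{m_{ij}}` for all `i`. -/
theorem kPhase_critical_iff_deformed_kirwan (K N : ℕ) (hK : 1 ≤ K) (hN : 1 ≤ N)
    (mmat : Fin K → Fin N → ℤ) (m : ℕ) (hm : 1 ≤ m)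
    (p Q : Fin K → ℝ) (hQ : ∀ i, 0 < Q i) :
    (∃ X : Fin N → ℝ, (∀ j, 0 < X j ∧ X j < 1) ∧
      (∀ i, ∏ j, X j ^ mmat i j = Q i) ∧
      (∀ j : Fin N,
        deriv (fun t => kPhase K N mmat m p Q (Function.update X j t)) (X j) = 0)) ↔
    ((∀ j, 0 < toricU K N mmat p j) ∧
      ∀ i, Q i ^ m = ∏ j, (1 - Real.exp (-(m : ℝ) * toricU K N mmat p j)) ^ mmat i j) := by
  have hm0 : (0 : ℝ) < m := by exact_mod_cast hm
  have hmne : m ≠ 0 := by omega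
  have hprod : ∀ (X : Fin N → ℝ) (i : Fin K),
      (∏ j, X j ^ mmat i j) ^ m = ∏ j, (X j ^ m) ^ mmat i j := by
    intro X i
    rw [← Finset.prod_pow]
    refine Finset.prod_congr rfl fun j _ => ?_
    rw [← zpow_natCast, ← zpow_natCast, zpow_comm]
  constructor
  · rintro ⟨X, hX, hc, hd⟩
    have hX' : ∀ j, X j ^ m = 1 - Real.exp (-(m : ℝ) * toricU K N mmat p j) := fun j =>
      (deriv_kPhase_eq_zero_iff mmat hm p Q X j (hX j).1 (hX j).2).1 (hd j)
    refine ⟨fun j => ?_, fun i => ?_⟩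
    · have h : Real.exp (-(m : ℝ) * toricU K N mmat p j) < 1 := by
        linarith [hX' j, pow_pos (hX j).1 m]
      rw [Real.exp_lt_one_iff] at h
      nlinarith
    · rw [← hc i, hprod]
      exact Finset.prod_congr rfl fun j _ => by rw [hX' j]
  · rintro ⟨hu, hQm⟩
    have hE : ∀ j, Real.exp (-(m : ℝ) * toricU K N mmat p j) < 1 := fun j => by
      rw [Real.exp_lt_one_iff]
      nlinarith [mul_pos hm0 (hu j)]
    set X : Fin N → ℝ := fun j =>
      (1 - Real.exp (-(m : ℝ) * toricU K N mmat p j)) ^ ((m : ℝ)⁻¹) with hXdef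
    have hXm : ∀ j, X j ^ m = 1 - Real.exp (-(m : ℝ) * toricU K N mmat p j) := fun j =>
      Real.rpow_inv_natCast_pow (sub_nonneg.2 (hE j).le) hmne
    have hX : ∀ j, 0 < X j ∧ X j < 1 := fun j =>
      ⟨Real.rpow_pos_of_pos (sub_pos.2 (hE j)) _,
        Real.rpow_lt_one (sub_nonneg.2 (hE j).le)
          (by linarith [Real.exp_pos (-(m : ℝ) * toricU K N mmat p j)]) (inv_pos.2 hm0)⟩
    refine ⟨X, hX, fun i => ?_, fun j =>
      (deriv_kPhase_eq_zero_iff mmat hm p Q X j (hX j).1 (hX j).2).2 (hXm j)⟩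
    -- Both sides are positive, so it suffices to compare their `m`-th powers.
    refine (pow_left_inj₀ (Finset.prod_pos fun j _ => zpow_pos (hX j).1 _).le (hQ i).le hmne).1 ?_
    rw [hprod, hQm i]
    exact Finset.prod_congr rfl fun j _ => by rw [hXm j]
end
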